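/- Let K ⊂ ℝ^{2n} be a convex body with 0 in its interior whose support function h_K and gauge function ‖·‖_K are both C¹ on ℝ^{2n}∖{0}. Let p > 1 and q = p/(p−1). Suppose l : ℝ → ℝ^{2n} is a 2π-periodic C¹ curve with l(t) ∈ ∂K for all t which satisfies l̇(t) = d·J∇(h_{K°}^q)(l(t)) for some constant d > 0. Then the loop z(t) := −J·(π d q)^{−1/2}·(l(t) − (1/2π)∫₀^{2π} l(s) ds) belongs to 𝓔_p and is a critical point of the functional I_p(z) = ∫₀^{2π} h_K^p(ż(t)) dt. -/

import Mathlib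

open MeasureTheory Real Set Filter intervalIntegral Metric
open scoped InnerProductSpace Topology Pointwise

noncomputable section

/-- The phase space `ℝ^{2n}`. -/
abbrev E (n : ℕ) := EuclideanSpace ℝ (Fin (2 * n))

/-- The standard complex structure `J` on `ℝ^{2n}`, given in coordinates
`(x₁,y₁,…,xₙ,yₙ)` by `J(x₁,y₁,…,xₙ,yₙ) = (−y₁,x₁,…,−yₙ,xₙ)`. -/
def Jmap (n : ℕ) (v : E n) : E n := WithLp.toLp 2 fun i =>
  if _h : i.val % 2 = 0 then -v ⟨i.val + 1, by have := i.isLt; omega⟩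
  else v ⟨i.val - 1, by have := i.isLt; omega⟩

/-- The support function `h_K(u) = sup_{x ∈ K} ⟨x, u⟩`. -/
def suppFn (n : ℕ) (K : Set (E n)) (u : E n) : ℝ :=
  sSup ((fun x => ⟪x, u⟫_ℝ) '' K)

/-- A convex body: a compact convex set with nonempty interior. -/
def IsConvexBody (n : ℕ) (K : Set (E n)) : Prop :=
  IsCompact K ∧ Convex ℝ K ∧ (interior K).Nonempty

/-- Membership in the loop space `𝓔_p`: the pair `(z, dz)` represents an absolutely
continuous `2π`-periodic loop `z` with derivative `dz ∈ L^p([0,2π])`, mean zero and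
normalized action `(1/2)∫₀^{2π} ⟨J z, ż⟩ = 1`. -/
def InE (n : ℕ) (p : ℝ) (z dz : ℝ → E n) : Prop :=
  Function.Periodic z (2 * π) ∧
  (∀ a b : ℝ, IntervalIntegrable dz volume a b) ∧
  (∀ t, z t = z 0 + ∫ s in (0:ℝ)..t, dz s) ∧
  MemLp dz (ENNReal.ofReal p) (volume.restrict (Set.Ioc (0:ℝ) (2 * π))) ∧
  (∫ t in (0:ℝ)..(2 * π), z t) = 0 ∧
  (1 / 2) * ∫ t in (0:ℝ)..(2 * π), ⟪Jmap n (z t), dz t⟫_ℝ = 1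

/-- The (Ekeland–Hofer–Zehnder) capacity of a convex body,
`c(S) = (π · inf_{z ∈ 𝓔₂} (1/2π) ∫₀^{2π} h_S(ż(t)) dt)²`. -/
def capacity (n : ℕ) (S : Set (E n)) : ℝ :=
  (π * sInf { r : ℝ | ∃ z dz : ℝ → E n, InE n 2 z dz ∧
      r = (1 / (2 * π)) * ∫ t in (0:ℝ)..(2 * π), suppFn n S (dz t) }) ^ 2

/-- The action `𝒜(γ) = (1/2) ∫₀^{T₀} ⟨−Jγ̇(t), γ(t)⟩ dt` of a `T₀`-periodic curve. -/
def action (n : ℕ) (γ : ℝ → E n) (T₀ : ℝ) : ℝ :=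
  (1 / 2) * ∫ t in (0:ℝ)..T₀, ⟪-Jmap n (deriv γ t), γ t⟫_ℝ

/-- A closed characteristic on `∂K`: a nonconstant `T₀`-periodic `C¹` curve lying on
`∂K` satisfying `γ̇ = d·J∇F(γ)` for some `d > 0`, where `F = ‖·‖_K²`. -/
def IsClosedCharacteristic (n : ℕ) (K : Set (E n)) (γ : ℝ → E n) (T₀ : ℝ) : Prop :=
  0 < T₀ ∧ Function.Periodic γ T₀ ∧ ContDiff ℝ 1 γ ∧ (∃ s t, γ s ≠ γ t) ∧
  (∀ t, γ t ∈ frontier K) ∧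
  ∃ d : ℝ, 0 < d ∧ ∀ t, deriv γ t = d • Jmap n (gradient (fun x => gauge K x ^ 2) (γ t))

/-- A capacity carrier of `K`: a closed characteristic on `∂K` of minimal action. -/
def IsCapacityCarrier (n : ℕ) (K : Set (E n)) (γ : ℝ → E n) (T₀ : ℝ) : Prop :=
  IsClosedCharacteristic n K γ T₀ ∧
  ∀ γ' T₀', IsClosedCharacteristic n K γ' T₀' → action n γ T₀ ≤ action n γ' T₀'

/-- The minimal action of a closed characteristic on `∂K`. -/
def minAction (n : ℕ) (K : Set (E n)) : ℝ :=
  sInf { a : ℝ | ∃ γ T₀, IsClosedCharacteristic n K γ T₀ ∧ a = action n γ T₀ }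

/-- `K` has smooth boundary: its gauge function is `C¹` away from the origin. -/
def HasSmoothBoundary (n : ℕ) (K : Set (E n)) : Prop :=
  ContDiffOn ℝ 1 (gauge K) {(0 : E n)}ᶜ

/-- The `p`-sum `K +ₚ T` of Firey: the convex body with support function
`(h_K^p + h_T^p)^{1/p}`. -/
def pSum (n : ℕ) (p : ℝ) (K T : Set (E n)) : Set (E n) :=
  { x | ∀ u, ⟪x, u⟫_ℝ ≤ (suppFn n K u ^ p + suppFn n T u ^ p) ^ (1 / p) }

/-- The polar body `T° = {x : ⟨x,y⟩ ≤ 1 for all y ∈ T}`. -/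
def polarBody (n : ℕ) (T : Set (E n)) : Set (E n) :=
  { x | ∀ y ∈ T, ⟪x, y⟫_ℝ ≤ 1 }

/-- The length `∫₀^{T₀} ‖γ̇(t)‖_B dt` of a curve measured with the gauge of `B`. -/
def lengthIn (n : ℕ) (B : Set (E n)) (γ : ℝ → E n) (T₀ : ℝ) : ℝ :=
  ∫ t in (0:ℝ)..T₀, gauge B (deriv γ t)

/-- Critical point of the functional `I_p(z) = ∫₀^{2π} h_K^p(ż(t)) dt` on `𝓔_p`. -/
def IsCriticalPoint (n : ℕ) (p : ℝ) (K : Set (E n)) (z dz : ℝ → E n) : Prop :=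
  ∀ ξ dξ : ℝ → E n,
    Function.Periodic ξ (2 * π) →
    (∀ a b : ℝ, IntervalIntegrable dξ volume a b) →
    (∀ t, ξ t = ξ 0 + ∫ s in (0:ℝ)..t, dξ s) →
    MemLp dξ (ENNReal.ofReal p) (volume.restrict (Set.Ioc (0:ℝ) (2 * π))) →
    (∫ t in (0:ℝ)..(2 * π), ξ t) = 0 →
    (∫ t in (0:ℝ)..(2 * π), ⟪ξ t, Jmap n (dz t)⟫_ℝ) = 0 →
    (∫ t in (0:ℝ)..(2 * π), ⟪gradient (fun u => suppFn n K u ^ p) (dz t), dξ t⟫_ℝ) = 0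

/-- The rotation-invariant probability measure on the unit sphere of `ℝ^{2n}`. -/
def sphereMeasure (n : ℕ) : Measure (sphere (0 : E n) 1) :=
  ((volume : Measure (E n)).toSphere Set.univ)⁻¹ • (volume : Measure (E n)).toSphere

/-- The mean width parameter `M*(K) = ∫_{S^{2n-1}} h_K dσ`. -/
def meanWidth (n : ℕ) (K : Set (E n)) : ℝ :=
  ∫ x : sphere (0 : E n) 1, suppFn n K (x : E n) ∂(sphereMeasure n)

/-!
Where the gauge is differentiable on `∂K`, its gradient `v` at `x` satisfies `⟨v, x⟩ = 1` and
`v ∈ K°`. For `c > 0` the maximum `h_K(c v) = c` is therefore attained at `x`, so the linear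
function `⟨x, ·⟩` touches `h_K` from below at `c v`, and `x` is the gradient of `h_K` there.
Consequently the velocity `ż`, a multiple of `∇‖·‖_K(l)`, satisfies `∇(h_K^p)(ż) = const · l`, while
`l̇ = const · Jż`. Integrating `⟨l, ξ̇⟩` by parts turns the first variation of `I_p` into a multiple
of the constraint `∫ ⟨ξ, Jż⟩ = 0`. The factor `(π d q)^{-1/2}` normalizes the action: `l` has
action `π d q`, and rescaling a loop by `c` multiplies its action by `c²`.
-/

section IndefiniteIntegral

variable {F G : Type*} [NormedAddCommGroup F] [NormedAddCommGroup G] {a b : ℝ}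

/-- `u` is absolutely continuous on the interval between `a` and `b` with derivative `u'`, encoded
(as in `InE`) by saying that `u` is an indefinite integral of the integrable function `u'`. -/
structure IsIndefiniteIntegralOn [NormedSpace ℝ F] (u u' : ℝ → F) (a b : ℝ) : Prop where
  intervalIntegrable : IntervalIntegrable u' volume a b
  eq_add_integral : ∀ t ∈ uIcc a b, u t = u a + ∫ s in a..t, u' s

namespace IsIndefiniteIntegralOn

lemma of_contDiff [NormedSpace ℝ F] [CompleteSpace F] {u : ℝ → F} (hu : ContDiff ℝ 1 u) :
    IsIndefiniteIntegralOn u (deriv u) a b where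
  intervalIntegrable := (hu.continuous_deriv le_rfl).intervalIntegrable a b
  eq_add_integral t _ := by
    rw [integral_deriv_eq_sub (fun s _ => hu.differentiable one_ne_zero s)
      ((hu.continuous_deriv le_rfl).intervalIntegrable a t), add_sub_cancel]

lemma clm_comp [NormedSpace ℝ F] [CompleteSpace F] [NormedSpace ℝ G] [CompleteSpace G]
    {u u' : ℝ → F} (hu : IsIndefiniteIntegralOn u u' a b) (L : F →L[ℝ] G) :
    IsIndefiniteIntegralOn (fun t => L (u t)) (fun t => L (u' t)) a b where
  intervalIntegrable :=
    ⟨L.integrable_comp hu.intervalIntegrable.1, L.integrable_comp hu.intervalIntegrable.2⟩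
  eq_add_integral t ht := by
    rw [L.intervalIntegral_comp_comm (hu.intervalIntegrable.mono_set (uIcc_subset_uIcc_left ht)),
      ← map_add, ← hu.eq_add_integral t ht]

lemma integral_const_inner [InnerProductSpace ℝ F] [CompleteSpace F] {u u' : ℝ → F}
    (hu : IsIndefiniteIntegralOn u u' a b) (m : F) :
    ∫ t in a..b, ⟪m, u' t⟫_ℝ = ⟪m, u b - u a⟫_ℝ := by
  rw [hu.eq_add_integral b right_mem_uIcc, add_sub_cancel_left]
  exact (innerSL ℝ m).intervalIntegral_comp_comm hu.intervalIntegrable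

variable {u u' v v' : ℝ → ℝ}

lemma absolutelyContinuousOnInterval (hu : IsIndefiniteIntegralOn u u' a b) :
    AbsolutelyContinuousOnInterval (fun t => u a + ∫ s in a..t, u' s) a b :=
  contDiffOn_const.absolutelyContinuousOnInterval.add
    (hu.intervalIntegrable.absolutelyContinuousOnInterval_intervalIntegral left_mem_uIcc)

lemma continuousOn (hu : IsIndefiniteIntegralOn u u' a b) : ContinuousOn u (uIcc a b) :=
  hu.absolutelyContinuousOnInterval.continuousOn.congr hu.eq_add_integral

lemma ae_deriv_eq (hu : IsIndefiniteIntegralOn u u' a b) :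
    ∀ᵐ t, t ∈ uIoc a b → deriv (fun t => u a + ∫ s in a..t, u' s) t = u' t := by
  filter_upwards [hu.intervalIntegrable.ae_hasDerivAt_integral] with t ht htab
  exact ((ht (uIoc_subset_uIcc htab) a left_mem_uIcc).const_add (u a)).deriv

lemma integral_mul_eq_sub (hu : IsIndefiniteIntegralOn u u' a b)
    (hv : IsIndefiniteIntegralOn v v' a b) :
    ∫ t in a..b, u t * v' t = u b * v b - u a * v a - ∫ t in a..b, u' t * v t := by
  set U : ℝ → ℝ := fun t => u a + ∫ s in a..t, u' s
  set V : ℝ → ℝ := fun t => v a + ∫ s in a..t, v' s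
  have hU : ∀ t ∈ uIcc a b, U t = u t := fun t ht => (hu.eq_add_integral t ht).symm
  have hV : ∀ t ∈ uIcc a b, V t = v t := fun t ht => (hv.eq_add_integral t ht).symm
  have hleft : ∫ t in a..b, u t * v' t = ∫ t in a..b, U t * deriv V t := by
    refine integral_congr_ae ?_
    filter_upwards [hv.ae_deriv_eq] with t hderiv ht
    rw [hU t (uIoc_subset_uIcc ht), hderiv ht]
  have hright : ∫ t in a..b, u' t * v t = ∫ t in a..b, deriv U t * V t := by
    refine integral_congr_ae ?_
    filter_upwards [hu.ae_deriv_eq] with t hderiv ht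
    rw [hV t (uIoc_subset_uIcc ht), hderiv ht]
  rw [hleft, hright, ← hU b right_mem_uIcc, ← hV b right_mem_uIcc, ← hU a left_mem_uIcc,
    ← hV a left_mem_uIcc]
  exact hu.absolutelyContinuousOnInterval.integral_mul_deriv_eq_deriv_mul
    hv.absolutelyContinuousOnInterval

lemma integral_inner_eq_sub {F : Type*} [NormedAddCommGroup F] [InnerProductSpace ℝ F]
    [FiniteDimensional ℝ F] {u u' v v' : ℝ → F} (hu : IsIndefiniteIntegralOn u u' a b)
    (hv : IsIndefiniteIntegralOn v v' a b) :
    ∫ t in a..b, ⟪u t, v' t⟫_ℝ = ⟪u b, v b⟫_ℝ - ⟪u a, v a⟫_ℝ - ∫ t in a..b, ⟪u' t, v t⟫_ℝ := by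
  have : CompleteSpace F := FiniteDimensional.complete ℝ F
  set e := stdOrthonormalBasis ℝ F
  have hinner : ∀ x y : F, ⟪x, y⟫_ℝ = ∑ i, innerSL ℝ (e i) x * innerSL ℝ (e i) y := fun x y => by
    simp only [innerSL_apply_apply, ← e.sum_inner_mul_inner x y, real_inner_comm x]
  have hui := fun i => hu.clm_comp (innerSL ℝ (e i))
  have hvi := fun i => hv.clm_comp (innerSL ℝ (e i))
  simp only [hinner]
  rw [integral_finsetSum fun i _ =>
      (hvi i).intervalIntegrable.continuousOn_mul (hui i).continuousOn,
    integral_finsetSum fun i _ => (hui i).intervalIntegrable.mul_continuousOn (hvi i).continuousOn,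
    ← Finset.sum_sub_distrib, ← Finset.sum_sub_distrib]
  exact Finset.sum_congr rfl fun i _ => (hui i).integral_mul_eq_sub (hvi i)

end IsIndefiniteIntegralOn

end IndefiniteIntegral

section Sublinear

variable {V : Type*} [NormedAddCommGroup V] [NormedSpace ℝ V] {f : V → ℝ} {f' : V →L[ℝ] ℝ} {x : V}

lemma hasFDerivAt_apply_self_of_posHomogeneous (hf : HasFDerivAt f f' x)
    (hhom : ∀ t : ℝ, 0 < t → f (t • x) = t * f x) : f' x = f x := by
  have hray : HasDerivAt (fun t : ℝ => f (t • x)) (f' x) 1 := by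
    have hsmul : HasDerivAt (fun t : ℝ => t • x) x 1 := by
      simpa only [id, one_smul] using (hasDerivAt_id (1 : ℝ)).smul_const x
    exact hf.comp_hasDerivAt_of_eq 1 hsmul (one_smul ℝ x).symm
  have hlinear : HasDerivAt (fun t : ℝ => t * f x) (f x) 1 := hasDerivAt_mul_const (f x)
  have heq : (fun t : ℝ => f (t • x)) =ᶠ[𝓝 1] fun t => t * f x := by
    filter_upwards [lt_mem_nhds one_pos] with t ht using hhom t ht
  exact hray.unique (hlinear.congr_of_eventuallyEq heq)

lemma hasFDerivAt_apply_le_of_sublinear (hf : HasFDerivAt f f' x)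
    (hsub : ∀ y, f (x + y) ≤ f x + f y) (hhom : ∀ t : ℝ, 0 < t → ∀ y, f (t • y) = t * f y)
    (y : V) : f' y ≤ f y := by
  refine le_of_tendsto (hf.hasLineDerivAt y).tendsto_slope_zero_right ?_
  filter_upwards [self_mem_nhdsWithin] with t (ht : 0 < t)
  rw [smul_eq_mul, inv_mul_le_iff₀ ht, ← hhom t ht, sub_le_iff_le_add']
  exact hsub (t • y)

end Sublinear

section Gradient

variable {F : Type*} [NormedAddCommGroup F] [InnerProductSpace ℝ F] [CompleteSpace F]
  {f : F → ℝ} {x v : F}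

lemma hasGradientAt_rpow_const {r : ℝ} (hf : HasGradientAt f v x) (hx : f x ≠ 0 ∨ 1 ≤ r) :
    HasGradientAt (fun y => f y ^ r) ((r * f x ^ (r - 1)) • v) x := by
  rw [hasGradientAt_iff_hasFDerivAt, map_smulₛₗ]
  exact hf.hasFDerivAt.rpow_const hx

lemma hasGradientAt_of_isLocalMin_sub_inner (hf : DifferentiableAt ℝ f x)
    (hmin : IsLocalMin (fun y => f y - ⟪v, y⟫_ℝ) x) : HasGradientAt f v x := by
  have hfderiv : fderiv ℝ f x = InnerProductSpace.toDual ℝ F v := sub_eq_zero.mp <|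
    hmin.hasFDerivAt_eq_zero (hf.hasFDerivAt.sub (InnerProductSpace.toDual ℝ F v).hasFDerivAt)
  exact hasGradientAt_iff_hasFDerivAt.mpr (hfderiv ▸ hf.hasFDerivAt)

lemma inner_gradient_gauge_self {K : Set F} (hx : DifferentiableAt ℝ (gauge K) x) :
    ⟪gradient (gauge K) x, x⟫_ℝ = gauge K x := by
  rw [inner_gradient_left]
  exact hasFDerivAt_apply_self_of_posHomogeneous hx.hasFDerivAt
    fun t ht => gauge_smul_of_nonneg ht.le x

lemma inner_gradient_gauge_le {K : Set F} (hconv : Convex ℝ K) (habs : Absorbent ℝ K)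
    (hx : DifferentiableAt ℝ (gauge K) x) (y : F) :
    ⟪gradient (gauge K) x, y⟫_ℝ ≤ gauge K y := by
  rw [inner_gradient_left]
  exact hasFDerivAt_apply_le_of_sublinear hx.hasFDerivAt (gauge_add_le hconv habs x)
    (fun t ht => gauge_smul_of_nonneg ht.le) y

end Gradient

section ComplexStructure

variable {n : ℕ}

/-- The complex structure `J`, bundled as a continuous linear map. -/
def complexStructure (n : ℕ) : E n →L[ℝ] E n := LinearMap.toContinuousLinearMap
  { toFun := Jmap n
    map_add' := fun x y => by
      ext i
      simp only [Jmap, PiLp.add_apply]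
      split_ifs <;> ring
    map_smul' := fun a x => by
      ext i
      simp only [Jmap, PiLp.smul_apply, smul_eq_mul, RingHom.id_apply]
      split_ifs <;> ring }

lemma Jmap_smul (a : ℝ) (x : E n) : Jmap n (a • x) = a • Jmap n x :=
  map_smul (complexStructure n) a x

lemma Jmap_neg (x : E n) : Jmap n (-x) = -Jmap n x :=
  map_neg (complexStructure n) x

lemma Jmap_Jmap (x : E n) : Jmap n (Jmap n x) = -x := by
  ext i
  simp only [Jmap, PiLp.neg_apply]
  by_cases heven : i.val % 2 = 0
  · have hodd : ¬ (i.val + 1) % 2 = 0 := by omega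
    simp [heven, hodd]
  · have hpred : (i.val - 1) % 2 = 0 := by omega
    have hsucc : i.val - 1 + 1 = i.val := by omega
    simp [heven, hpred, hsucc]

end ComplexStructure

section DualPair

variable {n : ℕ} {K : Set (E n)} {x u v : E n}

lemma inner_le_suppFn (hK : Bornology.IsBounded K) (hx : x ∈ K) (u : E n) :
    ⟪x, u⟫_ℝ ≤ suppFn n K u := by
  obtain ⟨R, hR⟩ := hK.exists_norm_le
  refine le_csSup ⟨R * ‖u‖, ?_⟩ (mem_image_of_mem _ hx)
  rintro _ ⟨y, hy, rfl⟩
  exact (real_inner_le_norm y u).trans (by gcongr; exact hR y hy)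

lemma suppFn_eq_inner (hx : x ∈ K) (hmax : ∀ y ∈ K, ⟪y, u⟫_ℝ ≤ ⟪x, u⟫_ℝ) :
    suppFn n K u = ⟪x, u⟫_ℝ :=
  IsGreatest.csSup_eq ⟨mem_image_of_mem _ hx, forall_mem_image.mpr hmax⟩

lemma ne_zero_of_mem_frontier (h0 : (0 : E n) ∈ interior K) (hx : x ∈ frontier K) : x ≠ 0 := by
  rintro rfl
  exact hx.2 h0

lemma hasGradientAt_suppFn (hK : Bornology.IsBounded K) (hu : DifferentiableAt ℝ (suppFn n K) u)
    (hx : x ∈ K) (hmax : suppFn n K u = ⟪x, u⟫_ℝ) : HasGradientAt (suppFn n K) x u := by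
  refine hasGradientAt_of_isLocalMin_sub_inner hu (Eventually.of_forall fun y => ?_)
  simpa only [hmax, sub_self, sub_nonneg] using inner_le_suppFn hK hx y

/-- `x ∈ K` and `v ∈ K°` are in duality, `⟨v, x⟩ = 1`: thus `v` is the outer normal of `K` at the
boundary point `x` in the normalization given by the gradient of the gauge. -/
structure IsDualPair (n : ℕ) (K : Set (E n)) (x v : E n) : Prop where
  mem : x ∈ K
  mem_polarBody : v ∈ polarBody n K
  inner_eq_one : ⟪v, x⟫_ℝ = 1

lemma isDualPair_gradient_gauge (hclosed : IsClosed K) (hconv : Convex ℝ K)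
    (h0 : (0 : E n) ∈ interior K) (hx : x ∈ frontier K) (hdiff : DifferentiableAt ℝ (gauge K) x) :
    IsDualPair n K x (gradient (gauge K) x) where
  mem := hclosed.frontier_subset hx
  mem_polarBody y hy :=
    (inner_gradient_gauge_le hconv (absorbent_nhds_zero (mem_interior_iff_mem_nhds.mp h0))
      hdiff y).trans (gauge_le_one_of_mem hy)
  inner_eq_one := (inner_gradient_gauge_self hdiff).trans
    ((gauge_eq_one_iff_mem_frontier hconv (mem_interior_iff_mem_nhds.mp h0)).mpr hx)

namespace IsDualPair

variable {c : ℝ}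

lemma ne_zero (h : IsDualPair n K x v) : v ≠ 0 := by
  rintro rfl
  simpa using h.inner_eq_one

lemma inner_smul_eq (h : IsDualPair n K x v) (c : ℝ) : ⟪x, c • v⟫_ℝ = c := by
  rw [real_inner_smul_right, real_inner_comm, h.inner_eq_one, mul_one]

lemma suppFn_smul (h : IsDualPair n K x v) (hc : 0 ≤ c) : suppFn n K (c • v) = c := by
  rw [suppFn_eq_inner h.mem fun y hy => ?_, h.inner_smul_eq]
  rw [h.inner_smul_eq, real_inner_smul_right, real_inner_comm]
  exact mul_le_of_le_one_right hc (h.mem_polarBody y hy)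

lemma gradient_suppFn_rpow (h : IsDualPair n K x v) (hK : Bornology.IsBounded K) (hc : 0 < c)
    (hdiff : DifferentiableAt ℝ (suppFn n K) (c • v)) (p : ℝ) :
    gradient (fun u => suppFn n K u ^ p) (c • v) = (p * c ^ (p - 1)) • x := by
  have hsupp : suppFn n K (c • v) = c := h.suppFn_smul hc.le
  have hgrad : HasGradientAt (suppFn n K) x (c • v) :=
    hasGradientAt_suppFn hK hdiff h.mem (hsupp.trans (h.inner_smul_eq c).symm)
  rw [(hasGradientAt_rpow_const hgrad (Or.inl (hsupp.trans_ne hc.ne'))).gradient, hsupp]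

end IsDualPair

lemma gradient_gauge_rpow_of_mem_frontier (hconv : Convex ℝ K) (h0 : (0 : E n) ∈ interior K)
    (hx : x ∈ frontier K) (hdiff : DifferentiableAt ℝ (gauge K) x) (q : ℝ) :
    gradient (fun y => gauge K y ^ q) x = q • gradient (gauge K) x := by
  have hone : gauge K x = 1 :=
    (gauge_eq_one_iff_mem_frontier hconv (mem_interior_iff_mem_nhds.mp h0)).mpr hx
  rw [(hasGradientAt_rpow_const hdiff.hasGradientAt (Or.inl (hone.trans_ne one_ne_zero))).gradient,
    hone, one_rpow, mul_one]

end DualPair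

section RotatedLoop

variable {n : ℕ} {l : ℝ → E n} {c κ T : ℝ}

/-- The loop `-c · J(l - mean l)` attached to a `2π`-periodic curve `l`: it has mean zero, and its
velocity is a multiple of the normal when `l` is a characteristic. -/
def rotatedLoop (n : ℕ) (c : ℝ) (l : ℝ → E n) (t : ℝ) : E n :=
  -(c • Jmap n (l t - (1 / (2 * π)) • ∫ s in (0 : ℝ)..(2 * π), l s))

lemma Jmap_rotatedLoop (c : ℝ) (l : ℝ → E n) (t : ℝ) :
    Jmap n (rotatedLoop n c l t) = c • (l t - (1 / (2 * π)) • ∫ s in (0 : ℝ)..(2 * π), l s) := by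
  rw [rotatedLoop, Jmap_neg, Jmap_smul, Jmap_Jmap, smul_neg, neg_neg]

lemma rotatedLoop_eq_clm (c : ℝ) (l : ℝ → E n) : rotatedLoop n c l = fun t =>
    (-(c • complexStructure n)) (l t - (1 / (2 * π)) • ∫ s in (0 : ℝ)..(2 * π), l s) := rfl

lemma contDiff_rotatedLoop (hl : ContDiff ℝ 1 l) (c : ℝ) : ContDiff ℝ 1 (rotatedLoop n c l) := by
  rw [rotatedLoop_eq_clm]
  fun_prop

lemma deriv_rotatedLoop (hl : Differentiable ℝ l) (c t : ℝ) :
    deriv (rotatedLoop n c l) t = -(c • Jmap n (deriv l t)) :=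
  ((-(c • complexStructure n)).hasFDerivAt.comp_hasDerivAt t
    ((hl t).hasDerivAt.sub_const _)).deriv

lemma periodic_rotatedLoop (hl : Function.Periodic l (2 * π)) (c : ℝ) :
    Function.Periodic (rotatedLoop n c l) (2 * π) := fun t => by
  rw [rotatedLoop, rotatedLoop, hl t]

lemma integral_rotatedLoop (hl : IntervalIntegrable l volume 0 (2 * π)) (c : ℝ) :
    ∫ t in (0 : ℝ)..(2 * π), rotatedLoop n c l t = 0 := by
  rw [rotatedLoop_eq_clm, ContinuousLinearMap.intervalIntegral_comp_comm _
    (hl.sub intervalIntegrable_const), integral_sub hl intervalIntegrable_const,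
    intervalIntegral.integral_const, smul_smul, sub_zero,
    mul_one_div_cancel two_pi_pos.ne', one_smul, sub_self, map_zero]

lemma Jmap_deriv_rotatedLoop (hl : Differentiable ℝ l) (c t : ℝ) :
    Jmap n (deriv (rotatedLoop n c l) t) = c • deriv l t := by
  rw [deriv_rotatedLoop hl, Jmap_neg, Jmap_smul, Jmap_Jmap, smul_neg, neg_neg]

lemma action_rotatedLoop (hl : ContDiff ℝ 1 l) (hper : Function.Periodic l (2 * π)) (c : ℝ) :
    (1 / 2) * ∫ t in (0 : ℝ)..(2 * π), ⟪Jmap n (rotatedLoop n c l t), deriv (rotatedLoop n c l) t⟫_ℝ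
      = c ^ 2 * action n l (2 * π) := by
  set z := rotatedLoop n c l
  set m := (1 / (2 * π)) • ∫ s in (0 : ℝ)..(2 * π), l s
  have hz : ContDiff ℝ 1 z := contDiff_rotatedLoop hl c
  have hz' : Continuous (deriv z) := hz.continuous_deriv le_rfl
  have hmean : ∫ t in (0 : ℝ)..(2 * π), ⟪m, deriv z t⟫_ℝ = 0 := by
    have hclosed : z (2 * π) = z 0 := (periodic_rotatedLoop hper c).eq
    rw [(IsIndefiniteIntegralOn.of_contDiff hz).integral_const_inner, hclosed, sub_self,
      inner_zero_right]
  have hJz : ∀ t, Jmap n (z t) = c • (l t - m) := Jmap_rotatedLoop c l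
  have hlz : ∀ t, ⟪l t, deriv z t⟫_ℝ = c * ⟪-Jmap n (deriv l t), l t⟫_ℝ := fun t => by
    rw [deriv_rotatedLoop (hl.differentiable one_ne_zero), ← smul_neg, real_inner_smul_right,
      real_inner_comm]
  have hlint : IntervalIntegrable (fun t => ⟪l t, deriv z t⟫_ℝ) volume 0 (2 * π) :=
    (hl.continuous.inner hz').intervalIntegrable _ _
  have hmint : IntervalIntegrable (fun t => ⟪m, deriv z t⟫_ℝ) volume 0 (2 * π) :=
    (continuous_const.inner hz').intervalIntegrable _ _
  calc (1 / 2) * ∫ t in (0 : ℝ)..(2 * π), ⟪Jmap n (z t), deriv z t⟫_ℝ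
    _ = (1 / 2) * (c * ((∫ t in (0 : ℝ)..(2 * π), ⟪l t, deriv z t⟫_ℝ)
          - ∫ t in (0 : ℝ)..(2 * π), ⟪m, deriv z t⟫_ℝ)) := by
      simp only [hJz, real_inner_smul_left, inner_sub_left]
      rw [intervalIntegral.integral_const_mul, integral_sub hlint hmint]
    _ = c ^ 2 * action n l (2 * π) := by
      simp only [hmean, hlz, action, intervalIntegral.integral_const_mul]
      ring

lemma action_eq_of_inner_eq_one {v : ℝ → E n} (hinner : ∀ t, ⟪v t, l t⟫_ℝ = 1)
    (hderiv : ∀ t, deriv l t = κ • Jmap n (v t)) : action n l T = κ * T / 2 := by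
  have hconst : ∀ t, ⟪-Jmap n (deriv l t), l t⟫_ℝ = κ := fun t => by
    rw [hderiv, Jmap_smul, Jmap_Jmap, smul_neg, neg_neg, real_inner_smul_left, hinner, mul_one]
  simp only [action, hconst, intervalIntegral.integral_const, sub_zero, smul_eq_mul]
  ring

end RotatedLoop

section LoopSpace

variable {n : ℕ} {p : ℝ} {K : Set (E n)}

lemma inE_of_contDiff {z : ℝ → E n} (p : ℝ) (hz : ContDiff ℝ 1 z)
    (hper : Function.Periodic z (2 * π)) (hmean : ∫ t in (0 : ℝ)..(2 * π), z t = 0)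
    (haction : (1 / 2) * ∫ t in (0 : ℝ)..(2 * π), ⟪Jmap n (z t), deriv z t⟫_ℝ = 1) :
    InE n p z (deriv z) := by
  have hcont : Continuous (deriv z) := hz.continuous_deriv le_rfl
  refine ⟨hper, fun a b => hcont.intervalIntegrable a b,
    fun t => (IsIndefiniteIntegralOn.of_contDiff hz).eq_add_integral t right_mem_uIcc,
    ?_, hmean, haction⟩
  obtain ⟨C, hC⟩ := isCompact_Icc.exists_bound_of_continuousOn
    (hcont.continuousOn (s := Set.Icc (0 : ℝ) (2 * π)))
  refine MemLp.of_bound hcont.aestronglyMeasurable C ?_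
  filter_upwards [ae_restrict_mem measurableSet_Ioc] with t ht
  exact hC t (Ioc_subset_Icc_self ht)

lemma isCriticalPoint_of_gradient_eq {z dz l : ℝ → E n} {a b : ℝ}
    (hl : IsIndefiniteIntegralOn l (fun t => b • Jmap n (dz t)) 0 (2 * π))
    (hclosed : l (2 * π) = l 0)
    (hgrad : ∀ t, gradient (fun u => suppFn n K u ^ p) (dz t) = a • l t) :
    IsCriticalPoint n p K z dz := by
  intro ξ dξ hξper hdξ hξ _ _ hconstraint
  have hξprim : IsIndefiniteIntegralOn ξ dξ 0 (2 * π) := ⟨hdξ _ _, fun t _ => hξ t⟩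
  calc ∫ t in (0 : ℝ)..(2 * π), ⟪gradient (fun u => suppFn n K u ^ p) (dz t), dξ t⟫_ℝ
    _ = a * ∫ t in (0 : ℝ)..(2 * π), ⟪l t, dξ t⟫_ℝ := by
      simp only [hgrad, real_inner_smul_left, intervalIntegral.integral_const_mul]
    _ = a * -∫ t in (0 : ℝ)..(2 * π), ⟪b • Jmap n (dz t), ξ t⟫_ℝ := by
      rw [hl.integral_inner_eq_sub hξprim, hclosed, hξper.eq, sub_self, zero_sub]
    _ = a * -(b * ∫ t in (0 : ℝ)..(2 * π), ⟪ξ t, Jmap n (dz t)⟫_ℝ) := by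
      simp only [real_inner_comm (ξ _), real_inner_smul_right,
        intervalIntegral.integral_const_mul]
    _ = 0 := by rw [hconstraint, mul_zero, neg_zero, mul_zero]

lemma isCriticalPoint_rotatedLoop {l v : ℝ → E n} {c κ : ℝ} (hK : Bornology.IsBounded K)
    (hsupp : DifferentiableOn ℝ (suppFn n K) {(0 : E n)}ᶜ) (hl : ContDiff ℝ 1 l)
    (hper : Function.Periodic l (2 * π)) (hdual : ∀ t, IsDualPair n K (l t) (v t))
    (hderiv : ∀ t, deriv l t = κ • Jmap n (v t)) (hcκ : 0 < c * κ) (p : ℝ) :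
    IsCriticalPoint n p K (rotatedLoop n c l) (deriv (rotatedLoop n c l)) := by
  have hl' : Differentiable ℝ l := hl.differentiable one_ne_zero
  have hc : c ≠ 0 := left_ne_zero_of_mul hcκ.ne'
  have hvelocity : ∀ t, deriv (rotatedLoop n c l) t = (c * κ) • v t := fun t => by
    rw [deriv_rotatedLoop hl', hderiv, Jmap_smul, Jmap_Jmap, smul_neg, smul_neg, neg_neg, smul_smul]
  have hinverse : deriv l = fun t => c⁻¹ • Jmap n (deriv (rotatedLoop n c l) t) := by
    funext t
    rw [Jmap_deriv_rotatedLoop hl', inv_smul_smul₀ hc]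
  refine isCriticalPoint_of_gradient_eq (a := p * (c * κ) ^ (p - 1))
    (hinverse ▸ IsIndefiniteIntegralOn.of_contDiff hl) hper.eq fun t => ?_
  rw [hvelocity]
  exact (hdual t).gradient_suppFn_rpow hK hcκ (hsupp.differentiableAt <|
    isOpen_compl_singleton.mem_nhds <| smul_ne_zero hcκ.ne' (hdual t).ne_zero) p

end LoopSpace

lemma rpow_neg_half_sq_mul {a : ℝ} (ha : 0 < a) : (a ^ (-(1 : ℝ) / 2)) ^ 2 * a = 1 := by
  rw [neg_div, rpow_neg ha.le, ← sqrt_eq_rpow, inv_pow, sq_sqrt ha.le, inv_mul_cancel₀ ha.ne']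

theorem characteristic_gives_critical_point_general {n : ℕ} {K : Set (E n)} (hK : IsCompact K)
    (hconv : Convex ℝ K) (h0 : (0 : E n) ∈ interior K)
    (hsupp : DifferentiableOn ℝ (suppFn n K) {(0 : E n)}ᶜ)
    (hgauge : DifferentiableOn ℝ (gauge K) {(0 : E n)}ᶜ)
    (p : ℝ) {d q : ℝ} (hdq : 0 < d * q)
    {l : ℝ → E n} (hl : ContDiff ℝ 1 l) (hper : Function.Periodic l (2 * π))
    (hlK : ∀ t, l t ∈ frontier K)
    (hchar : ∀ t, deriv l t = d • Jmap n (gradient (fun x => gauge K x ^ q) (l t)))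
    {z : ℝ → E n} (hz : z = rotatedLoop n ((π * d * q) ^ (-(1 : ℝ) / 2)) l) :
    InE n p z (deriv z) ∧ IsCriticalPoint n p K z (deriv z) := by
  have hpos : 0 < π * d * q := by simpa only [mul_assoc] using mul_pos pi_pos hdq
  set c : ℝ := (π * d * q) ^ (-(1 : ℝ) / 2)
  have hc : 0 < c := rpow_pos_of_pos hpos _
  have hdiff : ∀ t, DifferentiableAt ℝ (gauge K) (l t) := fun t =>
    hgauge.differentiableAt (isOpen_compl_singleton.mem_nhds (ne_zero_of_mem_frontier h0 (hlK t)))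
  have hdual : ∀ t, IsDualPair n K (l t) (gradient (gauge K) (l t)) := fun t =>
    isDualPair_gradient_gauge hK.isClosed hconv h0 (hlK t) (hdiff t)
  have hlderiv : ∀ t, deriv l t = (d * q) • Jmap n (gradient (gauge K) (l t)) := fun t => by
    rw [hchar, gradient_gauge_rpow_of_mem_frontier hconv h0 (hlK t) (hdiff t), Jmap_smul, smul_smul]
  subst hz
  refine ⟨inE_of_contDiff p (contDiff_rotatedLoop hl c) (periodic_rotatedLoop hper c)
    (integral_rotatedLoop (hl.continuous.intervalIntegrable _ _) c) ?_, ?_⟩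
  · rw [action_rotatedLoop hl hper,
      action_eq_of_inner_eq_one (fun t => (hdual t).inner_eq_one) hlderiv,
      ← rpow_neg_half_sq_mul hpos]
    ring
  · exact isCriticalPoint_rotatedLoop hK.isBounded hsupp hl hper hdual hlderiv (mul_pos hc hdq) p

/-- From a closed characteristic `l` on `∂K` (i.e. `l̇ = d·J∇(h_{K°}^q)(l)`), the loop
`z(t) = −J·(πdq)^{-1/2}·(l(t) − mean l)` belongs to `𝓔_p` and is a critical point of
the functional `I_p(z) = ∫₀^{2π} h_K^p(ż)`. -/
theorem characteristic_gives_critical_point (n : ℕ) (K : Set (E n)) (hK : IsConvexBody n K)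
    (h0 : (0 : E n) ∈ interior K)
    (hsupp : ContDiffOn ℝ 1 (suppFn n K) {(0 : E n)}ᶜ)
    (hgauge : ContDiffOn ℝ 1 (gauge K) {(0 : E n)}ᶜ)
    (p q : ℝ) (hp : 1 < p) (hq : q = p / (p - 1))
    (l : ℝ → E n) (hlC1 : ContDiff ℝ 1 l) (hlper : Function.Periodic l (2 * π))
    (hlK : ∀ t, l t ∈ frontier K)
    (d : ℝ) (hd : 0 < d)
    (hchar : ∀ t, deriv l t = d • Jmap n (gradient (fun x => gauge K x ^ q) (l t)))
    (z : ℝ → E n)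
    (hzdef : ∀ t, z t =
      -(((π * d * q) ^ (-(1:ℝ) / 2)) •
        Jmap n (l t - (1 / (2 * π)) • ∫ s in (0:ℝ)..(2 * π), l s))) :
    InE n p z (deriv z) ∧ IsCriticalPoint n p K z (deriv z) := by
  exact characteristic_gives_critical_point_general hK.1 hK.2.1 h0
    (hsupp.differentiableOn one_ne_zero) (hgauge.differentiableOn one_ne_zero) p
    (mul_pos hd (hq ▸ div_pos (by linarith) (by linarith))) hlC1 hlper hlK hchar (funext hzdef)
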